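/- Let u₁ > 0, κ > 0 and μ < 0 with μ² > u₁κ², and let (x₁,x₂) : [0,τ] → ℝ² solve ẋ₁ = x₂, ẋ₂ = u₁·x₁ + 1/x₁³ with x₁(t) > 0 for all t, x₁(0) = κ, x₂(0) = μ, where τ > 0 satisfies cosh(2√u₁τ) = (μ² + u₁κ²)/(μ² − u₁κ²) and sinh(2√u₁τ) = −2√u₁κμ/(μ² − u₁κ²). Then κ·x₂(τ) = −μ·x₁(τ); that is, the ratio of the coordinates of consecutive switching points joined by an X-segment has constant magnitude but opposite sign. -/

import Mathlib

open Real

theorem const_aux (f : ℝ → ℝ) (τ : ℝ) (hτ : 0 < τ)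
    (h : ∀ t ∈ Set.Icc 0 τ, HasDerivAt f 0 t) : f τ = f 0 := by
  refine constant_of_has_deriv_right_zero (a := 0) (b := τ)
    (fun t ht => (h t ht).continuousAt.continuousWithinAt)
    (fun t ht => (h t ⟨ht.1, ht.2.le⟩).hasDerivWithinAt) τ ⟨hτ.le, le_rfl⟩

/-- Along an X-trajectory (ẋ₁ = x₂, ẋ₂ = u₁x₁ + 1/x₁³) starting at a switching
point `(κ, μ)` with `κ > 0`, `μ < 0`, `μ² > u₁κ²`, run for the inter-switching
time `τ > 0` determined by `cosh(2√u₁τ) = (μ² + u₁κ²)/(μ² − u₁κ²)` and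
`sinh(2√u₁τ) = −2√u₁κμ/(μ² − u₁κ²)`, the endpoint satisfies
`κ·x₂(τ) = −μ·x₁(τ)`: the coordinate ratio has constant magnitude and
opposite sign. -/
theorem X_segment_ratio
    (u₁ κ μ τ : ℝ) (hu₁ : 0 < u₁) (hκ : 0 < κ) (hμ : μ < 0)
    (hratio : u₁ * κ ^ 2 < μ ^ 2) (hτ : 0 < τ)
    (hcosh : Real.cosh (2 * Real.sqrt u₁ * τ)
      = (μ ^ 2 + u₁ * κ ^ 2) / (μ ^ 2 - u₁ * κ ^ 2))
    (hsinh : Real.sinh (2 * Real.sqrt u₁ * τ)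
      = -2 * Real.sqrt u₁ * κ * μ / (μ ^ 2 - u₁ * κ ^ 2))
    (x₁ x₂ : ℝ → ℝ)
    (hpos : ∀ t ∈ Set.Icc 0 τ, 0 < x₁ t)
    (hinit₁ : x₁ 0 = κ) (hinit₂ : x₂ 0 = μ)
    (hd₁ : ∀ t ∈ Set.Icc 0 τ, HasDerivAt x₁ (x₂ t) t)
    (hd₂ : ∀ t ∈ Set.Icc 0 τ,
      HasDerivAt x₂ (u₁ * x₁ t + 1 / (x₁ t) ^ 3) t) :
    κ * x₂ τ = -μ * x₁ τ := by
  obtain ⟨s, hs, rfl⟩ : ∃ s : ℝ, 0 < s ∧ u₁ = s ^ 2 :=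
    ⟨√u₁, Real.sqrt_pos.2 hu₁, (Real.sq_sqrt hu₁.le).symm⟩
  rw [Real.sqrt_sq hs.le] at hcosh hsinh
  have hE' : ∀ t ∈ Set.Icc 0 τ,
      HasDerivAt (fun t => x₂ t ^ 2 - s ^ 2 * x₁ t ^ 2 + (x₁ t ^ 2)⁻¹) 0 t := by
    intro t ht
    have hx := (hpos t ht).ne'
    have h := (((hd₂ t ht).pow 2).sub (((hd₁ t ht).pow 2).const_mul (s ^ 2))).add
      (((hd₁ t ht).pow 2).inv (pow_ne_zero 2 hx))
    refine h.congr_deriv ?_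
    simp only [Pi.pow_apply]
    field_simp
    ring
  have hw' : ∀ t ∈ Set.Icc 0 τ, HasDerivAt (fun t => x₁ t * x₂ t)
      (x₂ t ^ 2 + s ^ 2 * x₁ t ^ 2 + (x₁ t ^ 2)⁻¹) t := by
    intro t ht
    have hx := (hpos t ht).ne'
    refine ((hd₁ t ht).mul (hd₂ t ht)).congr_deriv ?_
    field_simp
    ring
  have key : ∀ c : ℝ, c ≠ 0 → c ^ 2 = s ^ 2 → 
      (x₁ τ * x₂ τ + c * x₁ τ ^ 2 +
        (x₂ τ ^ 2 - s ^ 2 * x₁ τ ^ 2 + (x₁ τ ^ 2)⁻¹) / (2 * c)) * Real.exp (-(2 * c * τ)) =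
      (x₁ 0 * x₂ 0 + c * x₁ 0 ^ 2 +
        (x₂ 0 ^ 2 - s ^ 2 * x₁ 0 ^ 2 + (x₁ 0 ^ 2)⁻¹) / (2 * c)) * Real.exp (-(2 * c * 0)) := by
    intro c hc hcs
    refine const_aux (fun t => (x₁ t * x₂ t + c * x₁ t ^ 2 +
        (x₂ t ^ 2 - s ^ 2 * x₁ t ^ 2 + (x₁ t ^ 2)⁻¹) / (2 * c)) * Real.exp (-(2 * c * t))) τ hτ ?_
    intro t ht
    have hx := (hpos t ht).ne'
    have he : HasDerivAt (fun t : ℝ => Real.exp (-(2 * c * t)))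
        (Real.exp (-(2 * c * t)) * (-(2 * c * 1))) t :=
      (((hasDerivAt_id t).const_mul (2 * c)).neg).exp
    have h := (((hw' t ht).add (((hd₁ t ht).pow 2).const_mul c)).add
      ((hE' t ht).div_const (2 * c))).mul he
    refine h.congr_deriv ?_
    simp only [Pi.add_apply, Pi.pow_apply]
    rw [← hcs]
    field_simp
    ring
  have hE := const_aux _ τ hτ hE'
  have k1 := key s hs.ne' rfl
  have k2 := key (-s) (neg_ne_zero.2 hs.ne') (by ring)
  simp only [hinit₁, hinit₂] at hE k1 k2
  rw [hE] at k1 k2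
  have hD : 0 < μ ^ 2 - s ^ 2 * κ ^ 2 := by linarith
  have e1 : Real.exp (-(2 * s * τ)) = Real.cosh (2 * s * τ) - Real.sinh (2 * s * τ) := by
    rw [Real.cosh_sub_sinh]
  have e2 : Real.exp (-(2 * -s * τ)) = Real.cosh (2 * s * τ) + Real.sinh (2 * s * τ) := by
    rw [Real.cosh_add_sinh]; congr 1; ring
  have hm : μ - s * κ < 0 := by nlinarith [mul_pos hs hκ]
  have hp : μ + s * κ < 0 := by
    by_contra hc
    nlinarith
  have hm' := hm.ne
  have hp' := hp.ne
  have hD' : μ ^ 2 - s ^ 2 * κ ^ 2 = (μ - s * κ) * (μ + s * κ) := by ring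
  have f1 : Real.exp (-(2 * s * τ)) = (μ + s * κ) / (μ - s * κ) := by
    rw [e1, hcosh, hsinh, hD']; field_simp; ring
  have f2 : Real.exp (-(2 * -s * τ)) = (μ - s * κ) / (μ + s * κ) := by
    rw [e2, hcosh, hsinh, hD']; field_simp; ring
  rw [f1] at k1
  rw [f2] at k2
  simp only [mul_zero, neg_zero, Real.exp_zero, mul_one] at k1 k2
  have g2 : ∀ P P0 a b : ℝ, a ≠ 0 → b ≠ 0 → P * (b / a) = P0 → P = P0 * a / b := by
    intro P P0 a b ha hb h
    rw [← h]; field_simp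
  have k1 := g2 _ _ _ _ hm' hp' k1
  have k2 := g2 _ _ _ _ hp' hm' k2
  have hw : x₁ τ * x₂ τ = -μ / (κ * ((μ - s * κ) * (μ + s * κ))) := by
    set w := x₁ τ * x₂ τ
    set z := x₁ τ ^ 2
    have : w = (((w + s * z + (μ ^ 2 - s ^ 2 * κ ^ 2 + (κ ^ 2)⁻¹) / (2 * s))) +
      (w + -s * z + (μ ^ 2 - s ^ 2 * κ ^ 2 + (κ ^ 2)⁻¹) / (2 * -s))) / 2 := by
      field_simp; ring
    rw [this, k1, k2]
    field_simp
    ring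
  have hz : x₁ τ ^ 2 = 1 / ((μ - s * κ) * (μ + s * κ)) := by
    set w := x₁ τ * x₂ τ
    set z := x₁ τ ^ 2
    rw [eq_div_iff (mul_ne_zero hm' hp')]
    rw [eq_div_iff hp'] at k1
    rw [eq_div_iff hm'] at k2
    rw [mul_neg, div_neg] at k2
    have hk : (κ ^ 2)⁻¹ * κ ^ 2 = 1 := inv_mul_cancel₀ (by positivity)
    generalize (κ ^ 2)⁻¹ = k at *
    have he : (μ ^ 2 - s ^ 2 * κ ^ 2 + k) / (2 * s) * (2 * s) =
      μ ^ 2 - s ^ 2 * κ ^ 2 + k := by field_simp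
    generalize (μ ^ 2 - s ^ 2 * κ ^ 2 + k) / (2 * s) = e at *
    apply mul_left_cancel₀ hs.ne'
    linear_combination (μ - s * κ) / 2 * k1 - (μ + s * κ) / 2 * k2 + s * hk + s * κ ^ 2 * he
  have hx := (hpos τ ⟨hτ.le, le_rfl⟩).ne'
  apply mul_left_cancel₀ hx
  calc x₁ τ * (κ * x₂ τ) = κ * (x₁ τ * x₂ τ) := by ring
    _ = -μ * x₁ τ ^ 2 := by rw [hw, hz]; field_simp
    _ = _ := by ring
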